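/- Safe screening rule for regularized logistic regression (Proposition 1). Suppose (x*, t*, z*) is an optimal solution attaining η_CR, let α and δ be defined from x*, and let η̄_R be any real number with η_R ≤ η̄_R. Then every optimal solution (x̂, ẑ) of the mixed-integer problem attaining η_R satisfies: ẑ_j = 0 for every index j with η_CR + μ − γ·δ_j > η̄_R, and ẑ_j = 1 for every index j with η_CR − μ + γ·δ_j > η̄_R. -/

import Mathlib

/-- The logistic loss `L(x) = (1/m) ∑ᵢ log (1 + exp (-yᵢ (A x)ᵢ))`. -/
noncomputable def logLoss (m n : ℕ) (A : Fin m → Fin n → ℝ) (y : Fin m → ℝ)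
    (x : Fin n → ℝ) : ℝ :=
  (1 / (m : ℝ)) * ∑ i, Real.log (1 + Real.exp (-(y i) * ∑ j, A i j * x j))

theorem aux_cone (a b z t w s e : ℝ) (hz : 0 ≤ z) (ht : 0 ≤ t) (hw : 0 ≤ w) (hs : 0 ≤ s)
    (h1 : a ^ 2 ≤ z * t) (h2 : b ^ 2 ≤ w * s) (he : 0 ≤ e) (he1 : e ≤ 1) :
    (a + e * (b - a)) ^ 2 ≤ (z + e * (w - z)) * (t + e * (s - t)) := by
  have hc : 2 * (a * b) ≤ z * s + w * t := by
    refine le_of_abs_le (abs_le_of_sq_le_sq ?_ (by positivity))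
    have h3 : a ^ 2 * b ^ 2 ≤ (z * t) * (w * s) := by gcongr
    nlinarith [sq_nonneg (z * s - w * t)]
  have e2 : 0 ≤ 1 - e := by linarith
  nlinarith [mul_le_mul_of_nonneg_left h1 (mul_nonneg e2 e2),
    mul_le_mul_of_nonneg_left h2 (mul_nonneg he he),
    mul_le_mul_of_nonneg_left hc (mul_nonneg he e2)]

theorem aux_log (u v : ℝ) :
    Real.log (1 + Real.exp (-u)) - (v - u) / (1 + Real.exp u) ≤ Real.log (1 + Real.exp (-v)) := by
  have hE := Real.exp_pos u
  have hj := convexOn_exp.2 (Set.mem_univ (-(v - u))) (Set.mem_univ (0 : ℝ))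
    (show 0 ≤ 1 / (1 + Real.exp u) by positivity)
    (show 0 ≤ Real.exp u / (1 + Real.exp u) by positivity) (by field_simp)
  simp only [smul_eq_mul, mul_zero, add_zero, Real.exp_zero, mul_one] at hj
  have hp : 0 < 1 + Real.exp (-u) := by positivity
  have h : Real.exp (Real.log (1 + Real.exp (-u)) - (v - u) / (1 + Real.exp u))
      ≤ 1 + Real.exp (-v) := by
    have e1 : Real.log (1 + Real.exp (-u)) - (v - u) / (1 + Real.exp u)
      = Real.log (1 + Real.exp (-u)) + 1 / (1 + Real.exp u) * (-(v - u)) := by ring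
    rw [e1, Real.exp_add, Real.exp_log hp]
    refine (mul_le_mul_of_nonneg_left hj hp.le).trans (le_of_eq ?_)
    have e2 : Real.exp (-(v - u)) = Real.exp u * Real.exp (-v) := by
      rw [← Real.exp_add]; ring_nf
    rw [e2, Real.exp_neg u]
    field_simp
    ring
  exact (Real.le_log_iff_exp_le (by positivity)).2 h

theorem aux_deriv (y u d : ℝ) :
    HasDerivAt (fun e : ℝ => Real.log (1 + Real.exp (-y * (u + e * d))))
      (-(y / (1 + Real.exp (y * u))) * d) 0 := by
  have h1 : HasDerivAt (fun e : ℝ => -y * (u + e * d)) (-y * d) 0 := by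
    simpa using (((hasDerivAt_id (0 : ℝ)).mul_const d).const_add u).const_mul (-y)
  have h2 := (h1.exp.const_add 1).log (by positivity)
  convert h2 using 1
  simp only [zero_mul, add_zero, neg_mul, Real.exp_neg]
  have := Real.exp_pos (y * u)
  field_simp
  ring

theorem aux_sum (m n : ℕ) (A : Fin m → Fin n → ℝ) (α : Fin m → ℝ) (d : Fin n → ℝ) :
    ∑ i, α i * ∑ j, A i j * d j = ∑ j, (∑ i, α i * A i j) * d j := by
  simp only [Finset.mul_sum, Finset.sum_mul]
  rw [Finset.sum_comm]
  simp only [mul_assoc]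

theorem aux_lin (n : ℕ) (a x d : Fin n → ℝ) (e : ℝ) :
    ∑ j, a j * (x j + e * d j) = ∑ j, a j * x j + e * ∑ j, a j * d j := by
  rw [Finset.mul_sum, ← Finset.sum_add_distrib]
  exact Finset.sum_congr rfl fun j _ => by ring

theorem aux_loss_deriv (m n : ℕ) (A : Fin m → Fin n → ℝ) (y : Fin m → ℝ)
    (xs d : Fin n → ℝ) (α : Fin m → ℝ)
    (hα : ∀ i, α i = y i / ((m : ℝ) * (1 + Real.exp (y i * ∑ j, A i j * xs j)))) :
    HasDerivAt (fun e : ℝ => logLoss m n A y (fun j => xs j + e * d j))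
      (-∑ j, (∑ i, α i * A i j) * d j) 0 := by
  have h := (HasDerivAt.fun_sum (u := Finset.univ) (fun i _ =>
    aux_deriv (y i) (∑ j, A i j * xs j) (∑ j, A i j * d j))).const_mul (1 / (m : ℝ))
  unfold logLoss
  simp only [aux_lin]
  refine h.congr_deriv (Eq.symm ?_)
  rw [← aux_sum, Finset.mul_sum, ← Finset.sum_neg_distrib]
  refine Finset.sum_congr rfl fun i _ => ?_
  rw [hα, ← div_div, div_right_comm]
  ring

theorem aux_loss_convex (m n : ℕ) (A : Fin m → Fin n → ℝ) (y : Fin m → ℝ)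
    (xs x : Fin n → ℝ) (α : Fin m → ℝ)
    (hα : ∀ i, α i = y i / ((m : ℝ) * (1 + Real.exp (y i * ∑ j, A i j * xs j)))) :
    logLoss m n A y xs - ∑ j, (∑ i, α i * A i j) * (x j - xs j) ≤ logLoss m n A y x := by
  unfold logLoss
  rw [← aux_sum, Finset.mul_sum, Finset.mul_sum, ← Finset.sum_sub_distrib]
  refine Finset.sum_le_sum fun i _ => ?_
  have h := aux_log (y i * ∑ j, A i j * xs j) (y i * ∑ j, A i j * x j)
  have h' := mul_le_mul_of_nonneg_left h (show (0 : ℝ) ≤ 1 / m by positivity)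
  simp only [neg_mul]
  refine le_trans (le_of_eq ?_) h'
  rw [hα, ← div_div, div_right_comm]
  simp only [mul_sub, Finset.sum_sub_distrib]
  ring

/-- Safe screening rule for `ℓ₀`-`ℓ₂` regularized logistic regression (Proposition 1).
`(xs, ts, zs)` is an optimal solution of the conic relaxation attaining `ηCR`;
`α` and `δ` are defined from `xs`; `ηR` is the optimal value (infimum) of the
mixed-integer problem and `ηbar` is an upper bound on `ηR`.  Then every optimal
solution `(xh, zh)` of the mixed-integer problem attaining `ηR` satisfies
`zh j = 0` whenever `ηCR + μ - γ δ_j > ηbar`, and `zh j = 1` whenever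
`ηCR - μ + γ δ_j > ηbar`. -/
theorem safe_screening_REG
    (m n : ℕ) (hm : 0 < m) (hn : 0 < n)
    (A : Fin m → Fin n → ℝ) (y : Fin m → ℝ) (hy : ∀ i, y i = 1 ∨ y i = -1)
    (γ μ : ℝ) (hγ : 0 < γ) (hμ : 0 < μ)
    -- (xs, ts, zs) is an optimal solution of the conic relaxation
    (xs ts zs : Fin n → ℝ)
    (hts : ∀ j, 0 ≤ ts j) (hzs : ∀ j, 0 ≤ zs j ∧ zs j ≤ 1)
    (hcone_s : ∀ j, (xs j) ^ 2 ≤ zs j * ts j)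
    (hopt : ∀ x t z : Fin n → ℝ, (∀ j, 0 ≤ t j) → (∀ j, 0 ≤ z j ∧ z j ≤ 1) →
      (∀ j, (x j) ^ 2 ≤ z j * t j) →
      logLoss m n A y xs + (1 / γ) * ∑ j, ts j + μ * ∑ j, zs j ≤
        logLoss m n A y x + (1 / γ) * ∑ j, t j + μ * ∑ j, z j)
    (ηCR : ℝ)
    (hηCR : ηCR = logLoss m n A y xs + (1 / γ) * ∑ j, ts j + μ * ∑ j, zs j)
    -- dual quantities defined from xs
    (α : Fin m → ℝ)
    (hα : ∀ i, α i = y i / ((m : ℝ) * (1 + Real.exp (y i * ∑ j, A i j * xs j))))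
    (δ : Fin n → ℝ)
    (hδ : ∀ j, δ j = (1 / 4) * (∑ i, α i * A i j) ^ 2)
    -- ηR is the optimal value (infimum) of the mixed-integer problem
    (ηR : ℝ)
    (hηR : ηR = sInf {v : ℝ | ∃ x z : Fin n → ℝ, (∀ j, z j = 0 ∨ z j = 1) ∧
      (∀ j, z j = 0 → x j = 0) ∧
      v = logLoss m n A y x + (1 / γ) * ∑ j, (x j) ^ 2 + μ * ∑ j, z j})
    (ηbar : ℝ) (hub : ηR ≤ ηbar)
    -- (xh, zh) is an optimal solution of the mixed-integer problem attaining ηR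
    (xh zh : Fin n → ℝ)
    (hzh : ∀ j, zh j = 0 ∨ zh j = 1) (hxz : ∀ j, zh j = 0 → xh j = 0)
    (hatt : logLoss m n A y xh + (1 / γ) * ∑ j, (xh j) ^ 2 + μ * ∑ j, zh j = ηR) :
    ∀ j, (ηCR + μ - γ * δ j > ηbar → zh j = 0) ∧
         (ηCR - μ + γ * δ j > ηbar → zh j = 1) := by
  set g : Fin n → ℝ := fun j => ∑ i, α i * A i j with hg
  -- first-order optimality
  have hfo : ∀ x t z : Fin n → ℝ, (∀ j, 0 ≤ t j) → (∀ j, 0 ≤ z j ∧ z j ≤ 1) →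
      (∀ j, (x j) ^ 2 ≤ z j * t j) →
      0 ≤ -∑ j, g j * (x j - xs j) + ((1 / γ) * ∑ j, (t j - ts j) + μ * ∑ j, (z j - zs j)) := by
    intro x t z ht hz hc
    set C := (1 / γ) * ∑ j, (t j - ts j) + μ * ∑ j, (z j - zs j) with hC
    have hd := (aux_loss_deriv m n A y xs (fun j => x j - xs j) α hα).add
      ((hasDerivAt_id (0 : ℝ)).mul_const C)
    rw [one_mul] at hd
    refine ge_of_tendsto hd.tendsto_slope_zero_right ?_
    filter_upwards [Ioo_mem_nhdsGT (show (0 : ℝ) < 1 by norm_num)] with e he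
    have he0 := he.1
    have he1 := he.2
    have h := hopt (fun j => xs j + e * (x j - xs j)) (fun j => ts j + e * (t j - ts j))
      (fun j => zs j + e * (z j - zs j))
      (fun j => by nlinarith [hts j, ht j])
      (fun j => ⟨by nlinarith [(hzs j).1, (hz j).1], by nlinarith [(hzs j).2, (hz j).2]⟩)
      (fun j => aux_cone _ _ _ _ _ _ _ (hzs j).1 (hts j) (hz j).1 (ht j) (hcone_s j) (hc j)
        he0.le he1.le)
    simp only [Finset.sum_add_distrib, ← Finset.mul_sum] at h
    simp only [smul_eq_mul, Pi.add_apply, zero_add, zero_mul, add_zero, id]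
    refine mul_nonneg (inv_nonneg.2 he0.le) ?_
    rw [hC]
    linarith
  -- key inequality
  have key : ∀ z : Fin n → ℝ, (∀ j, 0 ≤ z j ∧ z j ≤ 1) →
      ηCR + ∑ k, (zh k - z k) * (μ - γ * δ k) ≤ ηR := by
    intro z hz
    have h1 := hfo (fun j => g j * γ / 2 * z j) (fun j => z j * (g j * γ / 2) ^ 2) z
      (fun j => mul_nonneg (hz j).1 (sq_nonneg _)) hz (fun j => le_of_eq (by ring))
    have h2 := aux_loss_convex m n A y xs xh α hα
    have h3 : ∑ k, (zh k - z k) * (μ - γ * δ k) ≤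
        ∑ k, ((-(g k * (xh k - xs k)) + 1 / γ * xh k ^ 2 + μ * zh k)
        - (-(g k * (g k * γ / 2 * z k - xs k)) + 1 / γ * (z k * (g k * γ / 2) ^ 2) + μ * z k)) := by
      refine Finset.sum_le_sum fun k _ => ?_
      have hdk : δ k = 1 / 4 * g k ^ 2 := hδ k
      rw [hdk]
      have e1 : 1 / γ * (z k * (g k * γ / 2) ^ 2) = z k * g k ^ 2 * γ / 4 := by
        field_simp; ring
      rw [e1]
      rcases hzh k with h0 | h0
      · rw [h0, hxz k h0]
        apply le_of_eq; ring
      · rw [h0]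
        have e2 : 0 ≤ 1 / γ * (xh k - g k * γ / 2) ^ 2 := by positivity
        have e3 : 1 / γ * (xh k - g k * γ / 2) ^ 2
          = 1 / γ * xh k ^ 2 - g k * xh k + γ * g k ^ 2 / 4 := by field_simp; ring
        linarith
    have h2' : logLoss m n A y xs - ∑ j, g j * (xh j - xs j) ≤ logLoss m n A y xh := h2
    rw [Finset.sum_sub_distrib] at h3
    simp only [Finset.sum_add_distrib, Finset.sum_neg_distrib] at h3
    simp only [Finset.sum_sub_distrib, mul_sub, ← Finset.mul_sum] at h1 h2' h3 hηCR hatt ⊢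
    linarith
  have hz01 : ∀ k, 0 ≤ zh k ∧ zh k ≤ 1 := fun k => by
    rcases hzh k with h | h <;> rw [h] <;> norm_num
  have hupd : ∀ j (c : ℝ), 0 ≤ c → c ≤ 1 → ηCR + (zh j - c) * (μ - γ * δ j) ≤ ηR := by
    intro j c hc0 hc1
    have h := key (Function.update zh j c) (fun k => by
      by_cases hk : k = j
      · subst hk; simp [hc0, hc1]
      · simpa [hk] using hz01 k)
    rw [Finset.sum_eq_single j (fun k _ hk => by simp [hk]) (by simp)] at h
    simpa using h
  intro j
  refine ⟨fun h => (hzh j).resolve_right fun h1 => ?_, fun h => (hzh j).resolve_left fun h1 => ?_⟩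
  · have := hupd j 0 le_rfl zero_le_one
    rw [h1] at this
    linarith
  · have := hupd j 1 zero_le_one le_rfl
    rw [h1] at this
    linarith
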